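/- arXiv:2403.16098 — 10 statements merged into one kernel-verified Lean document; each statement's English description precedes it below -/
import Mathlib

section
/- Let n, m ≥ 1 and let q ≥ 0, r ≥ 1 be integers with q + 1 ≤ n and r ≤ m. Then the set B of all squarefree vectors u : Fin n ⊕ Fin m → ℕ with (|u|_x, |u|_y) = (q, r) or (|u|_x, |u|_y) = (q+1, r−1) satisfies the exchange property; equivalently, the mixed product ideal I_q·J_r + I_{q+1}·J_{r−1} of squarefree Veronese ideals is matroidal. -/
/-- A set `B` of exponent vectors (all of the same total degree) satisfies the exchange
property if for all `u, v ∈ B` and every index `i` with `u i > v i` there is an index `j`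
with `u j < v j` such that `u - e_i + e_j ∈ B`. -/
def ExchangeProperty {σ : Type*} [DecidableEq σ] (B : Set (σ → ℕ)) : Prop :=
  ∀ u ∈ B, ∀ v ∈ B, ∀ i : σ, v i < u i →
    ∃ j : σ, u j < v j ∧
      (fun l => u l - (if l = i then 1 else 0) + (if l = j then 1 else 0)) ∈ B

section SwapUnit

variable {α β : Type*} [DecidableEq α]

/-- Replacing `u` by `u - e_i + e_j` where `0 < u i`, in subtraction-free form. -/
lemma swapUnit_add {u : α → ℕ} {i : α} (hi : 0 < u i) (j l : α) :
    (u l - (if l = i then 1 else 0) + (if l = j then 1 else 0)) + (if l = i then 1 else 0) =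
      u l + (if l = j then 1 else 0) := by
  split_ifs <;> subst_vars <;> omega

/-- A squarefree vector stays squarefree when a unit is moved to a vanishing coordinate. -/
lemma swapUnit_le_one {u : α → ℕ} (hu : ∀ l, u l ≤ 1) (i : α) {j : α} (hj : u j = 0) (l : α) :
    u l - (if l = i then 1 else 0) + (if l = j then 1 else 0) ≤ 1 := by
  have := hu l
  split_ifs <;> subst_vars <;> omega

/-- Effect of moving a unit on the coordinate sum over a family of indices. -/
lemma sum_swapUnit [Fintype β] {u : α → ℕ} {i : α} (hi : 0 < u i) (j : α) (f : β → α) :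
    (∑ k, (u (f k) - (if f k = i then 1 else 0) + (if f k = j then 1 else 0))) +
        ∑ k, (if f k = i then 1 else 0) =
      ∑ k, u (f k) + ∑ k, (if f k = j then 1 else 0) := by
  rw [← Finset.sum_add_distrib, ← Finset.sum_add_distrib]
  exact Finset.sum_congr rfl fun k _ => swapUnit_add hi j (f k)

end SwapUnit

/-- If `v` is smaller than `u` at some index, then either `v` is larger somewhere or its sum is
smaller. -/
lemma exists_lt_or_sum_lt {β : Type*} [Fintype β] {u v : β → ℕ} {i : β} (hi : v i < u i) :
    (∃ j, u j < v j) ∨ ∑ k, v k < ∑ k, u k := by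
  by_cases h : ∃ j, u j < v j
  · exact .inl h
  · push Not at h
    exact .inr (Finset.sum_lt_sum (fun k _ => h k) ⟨i, Finset.mem_univ i, hi⟩)

/-- The mixed product ideal `I_q J_r + I_{q+1} J_{r-1}` of squarefree Veronese ideals is
matroidal: its set of exponent vectors satisfies the exchange property. -/
theorem mixed_product_two_step_matroidal (n m : ℕ) (hn : 1 ≤ n) (hm : 1 ≤ m)
    (q r : ℕ) (hr : 1 ≤ r) (hq : q + 1 ≤ n) (hrm : r ≤ m) :
    ExchangeProperty {u : Fin n ⊕ Fin m → ℕ |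
      (∀ l, u l ≤ 1) ∧
      (((∑ i : Fin n, u (Sum.inl i)) = q ∧ (∑ j : Fin m, u (Sum.inr j)) = r) ∨
       ((∑ i : Fin n, u (Sum.inl i)) = q + 1 ∧ (∑ j : Fin m, u (Sum.inr j)) = r - 1))} := by
  rintro u ⟨hu, hus⟩ v ⟨hv, hvs⟩ i hi
  have hpos : 0 < u i := by omega
  have hx := fun j => sum_swapUnit hpos j (Sum.inl : Fin n → Fin n ⊕ Fin m)
  have hy := fun j => sum_swapUnit hpos j (Sum.inr : Fin m → Fin n ⊕ Fin m)
  have hzero : ∀ j, u j < v j → u j = 0 := fun j hj => by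
    have := hv j
    omega
  rcases i with i | i
  · rcases exists_lt_or_sum_lt (u := fun k => u (.inl k)) (v := fun k => v (.inl k)) hi with
      ⟨j, hj⟩ | hlt
    · refine ⟨.inl j, hj, swapUnit_le_one hu _ (hzero _ hj), ?_⟩
      have h₁ := hx (.inl j)
      have h₂ := hy (.inl j)
      simp at h₁ h₂ ⊢
      omega
    · obtain ⟨j, -, hj⟩ : ∃ j ∈ Finset.univ, u (.inr j) < v (.inr j) :=
        Finset.exists_lt_of_sum_lt (by omega)
      refine ⟨.inr j, hj, swapUnit_le_one hu _ (hzero _ hj), ?_⟩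
      have h₁ := hx (.inr j)
      have h₂ := hy (.inr j)
      simp at h₁ h₂ ⊢
      omega
  · rcases exists_lt_or_sum_lt (u := fun k => u (.inr k)) (v := fun k => v (.inr k)) hi with
      ⟨j, hj⟩ | hlt
    · refine ⟨.inr j, hj, swapUnit_le_one hu _ (hzero _ hj), ?_⟩
      have h₁ := hx (.inr j)
      have h₂ := hy (.inr j)
      simp at h₁ h₂ ⊢
      omega
    · obtain ⟨j, -, hj⟩ : ∃ j ∈ Finset.univ, u (.inl j) < v (.inl j) :=
        Finset.exists_lt_of_sum_lt (by omega)
      refine ⟨.inl j, hj, swapUnit_le_one hu _ (hzero _ hj), ?_⟩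
      have h₁ := hx (.inl j)
      have h₂ := hy (.inl j)
      simp at h₁ h₂ ⊢
      omega
end

section
/- Let n, m ≥ 1 and let r > 1 be an integer with r ≤ n and r ≤ m. Then the set B of all squarefree vectors u : Fin n ⊕ Fin m → ℕ with (|u|_x, |u|_y) = (r, 0) or (|u|_x, |u|_y) = (0, r) does NOT satisfy the exchange property; equivalently, the mixed product ideal I_r + J_r is not matroidal (not polymatroidal). -/
/-- If `r ≤ n`, the indicator of the first `r` elements of `Fin n` has sum `r`. -/
theorem Fin.sum_indicator_val_lt {n r : ℕ} (h : r ≤ n) :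
    (∑ i : Fin n, if (i : ℕ) < r then 1 else 0) = r := by
  simp [Fin.card_filter_val_lt, h]

/-- For `r > 1` the mixed product ideal `I_r + J_r` is not matroidal: its set of
exponent vectors does not satisfy the exchange property. -/
theorem Ir_plus_Jr_not_matroidal (n m : ℕ) (hn : 1 ≤ n) (hm : 1 ≤ m)
    (r : ℕ) (hr : 1 < r) (hrn : r ≤ n) (hrm : r ≤ m) :
    ¬ ExchangeProperty {u : Fin n ⊕ Fin m → ℕ |
      (∀ l, u l ≤ 1) ∧
      (((∑ i : Fin n, u (Sum.inl i)) = r ∧ (∑ j : Fin m, u (Sum.inr j)) = 0) ∨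
       ((∑ i : Fin n, u (Sum.inl i)) = 0 ∧ (∑ j : Fin m, u (Sum.inr j)) = r))} := by
  intro h
  obtain ⟨j, hj, -, hw⟩ := h
    (Sum.elim (fun i : Fin n => if (i : ℕ) < r then 1 else 0) (fun _ => 0))
    ⟨by rintro (i | j) <;> simp only [Sum.elim_inl, Sum.elim_inr] <;> grind,
      Or.inl ⟨Fin.sum_indicator_val_lt hrn, by simp⟩⟩
    (Sum.elim (fun _ => 0) (fun j : Fin m => if (j : ℕ) < r then 1 else 0))
    ⟨by rintro (i | j) <;> simp only [Sum.elim_inl, Sum.elim_inr] <;> grind,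
      Or.inr ⟨by simp, Fin.sum_indicator_val_lt hrm⟩⟩
    (Sum.inl ⟨0, hn⟩) (by simp [Nat.zero_lt_of_lt hr])
  rcases j with j | j
  · simp at hj
  rcases hw with ⟨-, hy⟩ | ⟨hx, -⟩
  · simpa using Finset.sum_eq_zero_iff.mp hy j (Finset.mem_univ _)
  · have hone := Finset.sum_eq_zero_iff.mp hx ⟨1, by omega⟩ (Finset.mem_univ _)
    simp at hone
    omega
end

section
/- Let n, m ≥ 1 and let q, r, s, t be integers with q ≥ 1, t ≥ 1, s > q + 1, q + r = s + t, s ≤ n and r ≤ m. Then the set B of all squarefree vectors u : Fin n ⊕ Fin m → ℕ with (|u|_x, |u|_y) = (q, r) or (|u|_x, |u|_y) = (s, t) does NOT satisfy the exchange property; equivalently, the mixed product ideal I_q·J_r + I_s·J_t is not polymatroidal. -/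
/-- The indicator of the first `k` elements of `Fin n` has sum `k`. -/
theorem sum_fin_ite_val_lt {n k : ℕ} (hk : k ≤ n) :
    (∑ i : Fin n, if i.val < k then 1 else 0) = k := by
  rw [Finset.sum_boole, Fin.card_filter_val_lt]
  simpa using hk

/-- For `q ≥ 1`, `t ≥ 1`, `s > q + 1` and `q + r = s + t` the mixed product ideal
`I_q J_r + I_s J_t` is not polymatroidal: its set of exponent vectors does not satisfy
the exchange property. -/
theorem IqJr_plus_IsJt_not_polymatroidal (n m : ℕ) (hn : 1 ≤ n) (hm : 1 ≤ m)
    (q r s t : ℕ) (hq : 1 ≤ q) (ht : 1 ≤ t) (hs : q + 1 < s) (hqr : q + r = s + t)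
    (hsn : s ≤ n) (hrm : r ≤ m) :
    ¬ ExchangeProperty {u : Fin n ⊕ Fin m → ℕ |
      (∀ l, u l ≤ 1) ∧
      (((∑ i : Fin n, u (Sum.inl i)) = q ∧ (∑ j : Fin m, u (Sum.inr j)) = r) ∨
       ((∑ i : Fin n, u (Sum.inl i)) = s ∧ (∑ j : Fin m, u (Sum.inr j)) = t))} := by
  intro hB
  obtain ⟨j, hj, -, hsum⟩ := hB
    (Sum.elim (fun i => if i.val < q then 1 else 0) (fun i => if i.val < r then 1 else 0))
    ⟨by rintro (l | l) <;> simp only [Sum.elim_inl, Sum.elim_inr] <;> split_ifs <;> simp,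
      Or.inl ⟨sum_fin_ite_val_lt (by lia), sum_fin_ite_val_lt hrm⟩⟩
    (Sum.elim (fun i => if i.val < s then 1 else 0) (fun i => if i.val < t then 1 else 0))
    ⟨by rintro (l | l) <;> simp only [Sum.elim_inl, Sum.elim_inr] <;> split_ifs <;> simp,
      Or.inr ⟨sum_fin_ite_val_lt hsn, sum_fin_ite_val_lt (by lia)⟩⟩
    (Sum.inr ⟨t, by lia⟩) (by simp; lia)
  rcases j with j | j
  · have hx := sum_fin_ite_val_lt (n := n) (k := q) (by lia)
    simp only [Sum.elim_inl, reduceCtorEq, if_false, Nat.sub_zero, Sum.inl.injEq,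
      Finset.sum_add_distrib, hx, Finset.sum_ite_eq', Finset.mem_univ, if_true] at hsum
    lia
  · simp only [Sum.elim_inr] at hj
    split_ifs at hj <;> lia
end

section
/- Let n, m ≥ 1 and let s, t, r be integers with s ≥ 2, t ≥ 1 and r = s + t. Then the set B of all vectors u : Fin n ⊕ Fin m → ℕ with (|u|_x, |u|_y) = (0, r) or (|u|_x, |u|_y) = (s, t) does NOT satisfy the exchange property; equivalently, the ideal (y_1,…,y_m)^r + (x_1,…,x_n)^s·(y_1,…,y_m)^t of sums of products of Veronese ideals is not polymatroidal. -/
/-- For `s ≥ 2`, `t ≥ 1` and `r = s + t`, the ideal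
`(y_1,…,y_m)^r + (x_1,…,x_n)^s (y_1,…,y_m)^t` is not polymatroidal: its set of exponent
vectors does not satisfy the exchange property. -/
theorem veronese_mixed_sum_not_polymatroidal (n m : ℕ) (hn : 1 ≤ n) (hm : 1 ≤ m)
    (s t r : ℕ) (hs : 2 ≤ s) (ht : 1 ≤ t) (hr : r = s + t) :
    ¬ ExchangeProperty {u : Fin n ⊕ Fin m → ℕ |
      (((∑ i : Fin n, u (Sum.inl i)) = 0 ∧ (∑ j : Fin m, u (Sum.inr j)) = r) ∨
       ((∑ i : Fin n, u (Sum.inl i)) = s ∧ (∑ j : Fin m, u (Sum.inr j)) = t))} := by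
  intro h
  let x₀ : Fin n := ⟨0, hn⟩
  let y₀ : Fin m := ⟨0, hm⟩
  obtain ⟨j, hj, hB⟩ := h (Sum.elim 0 (Pi.single y₀ r)) (Or.inl (by simp))
    (Sum.elim (Pi.single x₀ s) (Pi.single y₀ t)) (Or.inr (by simp)) (Sum.inr y₀)
    (by simp; omega)
  rcases j with j | j
  · -- the exchanged vector has `x`-degree one
    simp at hB
    omega
  · by_cases hjy : j = y₀
    · subst hjy
      simp at hj
      omega
    · simp [hjy] at hj
end

section
/- Let n, m ≥ 1, let h ≥ 1, and let a ≤ A be integers with 0 ≤ a, A ≤ n, h − A ≥ 0 and h − a ≤ m. Then the set B of all squarefree vectors u : Fin n ⊕ Fin m → ℕ with total coordinate sum h and a ≤ |u|_x ≤ A satisfies the exchange property. (This is the generator set of the ideal L = ∑_{r} I_{a_r} J_{b_r} with consecutive degrees a_{r+1} = a_r + 1, b_{r−1} = b_r + 1 and constant sum a_r + b_r = h; hence L is polymatroidal.) -/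
/-- Summing `u - e_i + e_j` along a map `f`, when `u i` is positive. -/
theorem sum_sub_single_add_single {σ ι : Type*} [DecidableEq σ] [Fintype ι] (f : ι → σ)
    {u : σ → ℕ} {i : σ} (hi : 0 < u i) (j : σ) :
    (∑ k, (u (f k) - (if f k = i then 1 else 0) + (if f k = j then 1 else 0))) +
        ∑ k, (if f k = i then 1 else 0) =
      (∑ k, u (f k)) + ∑ k, (if f k = j then 1 else 0) := by
  rw [← Finset.sum_add_distrib, ← Finset.sum_add_distrib]
  refine Finset.sum_congr rfl fun k _ => ?_
  have hk : f k = i → 0 < u (f k) := fun e => e ▸ hi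
  split_ifs <;> grind

/-- The generator set of the generalized mixed product ideal `L = ∑_r I_{a_r} J_{b_r}`
with consecutive degrees and constant total degree `h`, i.e. the set of all squarefree
exponent vectors of total degree `h` whose `x`-degree lies between `a` and `A`,
satisfies the exchange property; hence `L` is polymatroidal. -/
theorem generalized_mixed_product_polymatroidal (n m : ℕ) (hn : 1 ≤ n) (hm : 1 ≤ m)
    (h a A : ℕ) (hh : 1 ≤ h) (haA : a ≤ A) (hAn : A ≤ n) (hAh : A ≤ h) (ham : h ≤ a + m) :
    ExchangeProperty {u : Fin n ⊕ Fin m → ℕ |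
      (∀ l, u l ≤ 1) ∧
      (∑ l : Fin n ⊕ Fin m, u l) = h ∧
      a ≤ (∑ i : Fin n, u (Sum.inl i)) ∧ (∑ i : Fin n, u (Sum.inl i)) ≤ A} := by
  rintro u ⟨hu, hut, hua, huA⟩ v ⟨hv, hvt, hva, hvA⟩ i hi
  have hu0 : 0 < u i := by omega
  -- It suffices to find `j` for which the new `x`-degree stays in `[a, A]`.
  suffices hj : ∃ j, u j < v j ∧
      a + (∑ k : Fin n, if Sum.inl k = i then 1 else 0) ≤
        (∑ k : Fin n, u (Sum.inl k)) + (∑ k : Fin n, if Sum.inl k = j then 1 else 0) ∧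
      (∑ k : Fin n, u (Sum.inl k)) + (∑ k : Fin n, if Sum.inl k = j then 1 else 0) ≤
        A + (∑ k : Fin n, if Sum.inl k = i then 1 else 0) by
    obtain ⟨j, hj, hja, hjA⟩ := hj
    have hx := sum_sub_single_add_single (Sum.inl : Fin n → Fin n ⊕ Fin m) hu0 j
    have ht := sum_sub_single_add_single (fun l : Fin n ⊕ Fin m => l) hu0 j
    simp only [Finset.sum_ite_eq', Finset.mem_univ, if_true] at ht
    refine ⟨j, hj, fun l => ?_, by dsimp only; omega, by dsimp only; omega, by dsimp only; omega⟩
    have := hu l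
    have := hv l
    dsimp only
    split_ifs <;> grind
  rw [Fintype.sum_sum_type] at hut hvt
  rcases i with i | i
  · by_cases hx : ∃ k : Fin n, u (Sum.inl k) < v (Sum.inl k)
    · obtain ⟨k, hk⟩ := hx
      exact ⟨Sum.inl k, hk, by simpa using hua, by simpa using huA⟩
    · push Not at hx
      have hlt : ∑ k : Fin n, v (Sum.inl k) < ∑ k : Fin n, u (Sum.inl k) :=
        Finset.sum_lt_sum (fun k _ => hx k) ⟨i, Finset.mem_univ i, hi⟩
      obtain ⟨k, -, hk⟩ := Finset.exists_lt_of_sum_lt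
        (show ∑ k : Fin m, u (Sum.inr k) < ∑ k : Fin m, v (Sum.inr k) by omega)
      exact ⟨Sum.inr k, hk, by simp; omega, by simp; omega⟩
  · by_cases hy : ∃ k : Fin m, u (Sum.inr k) < v (Sum.inr k)
    · obtain ⟨k, hk⟩ := hy
      exact ⟨Sum.inr k, hk, by simpa using hua, by simpa using huA⟩
    · push Not at hy
      have hlt : ∑ k : Fin m, v (Sum.inr k) < ∑ k : Fin m, u (Sum.inr k) :=
        Finset.sum_lt_sum (fun k _ => hy k) ⟨i, Finset.mem_univ i, hi⟩
      obtain ⟨k, -, hk⟩ := Finset.exists_lt_of_sum_lt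
        (show ∑ k : Fin n, u (Sum.inl k) < ∑ k : Fin n, v (Sum.inl k) by omega)
      exact ⟨Sum.inl k, hk, by simp; omega, by simp; omega⟩
end

section
/- Let K be a field, n, m ≥ 1, let h ≥ 1 and let a ≤ A be integers with 0 ≤ a, A ≤ n, h − A ≥ 0 and h − a ≤ m. Let L be the ideal of S = K[x_1,…,x_n,y_1,…,y_m] generated by all squarefree monomials of total degree h whose degree in the x-variables lies between a and A (equivalently, L = ∑_r I_{a_r} J_{b_r} where a_r runs over the consecutive integers from a to A and b_r = h − a_r, with I_c the squarefree Veronese ideal of degree c in the x-variables and J_d that of degree d in the y-variables). Then L is normal, i.e., L^k is integrally closed for every k ≥ 1. -/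
open MvPolynomial

/-- `f` is integral over the ideal `I`: there is an equation
`f^N + c_1 f^{N-1} + ⋯ + c_N = 0` with `c_i ∈ I^i`. -/
def IsIntegralOverIdeal {R : Type*} [CommRing R] (I : Ideal R) (f : R) : Prop :=
  ∃ N : ℕ, 0 < N ∧ ∃ c : ℕ → R,
    (∀ i ∈ Finset.Icc 1 N, c i ∈ I ^ i) ∧
    f ^ N + ∑ i ∈ Finset.Icc 1 N, c i * f ^ (N - i) = 0

/-- An ideal is integrally closed if it contains every element integral over it. -/
def IsIntegrallyClosedIdeal {R : Type*} [CommRing R] (I : Ideal R) : Prop :=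
  ∀ f, IsIntegralOverIdeal I f → f ∈ I

/-- If a ring homomorphism `φ` to a domain maps `I` into the multiples of `p ^ c`, `p` prime,
then it does the same to every element integral over `I`. -/
theorem IsIntegralOverIdeal.prime_pow_dvd {R S : Type*} [CommRing R] [CommRing S] [IsDomain S]
    {I : Ideal R} {f : R} (hf : IsIntegralOverIdeal I f) (φ : R →+* S) {p : S} (hp : Prime p)
    {c : ℕ} (hI : I ≤ (Ideal.span {p ^ c}).comap φ) : p ^ c ∣ φ f := by
  obtain ⟨N, hN, b, hb, heq⟩ := hf
  have hbi : ∀ i ∈ Finset.Icc 1 N, p ^ (c * i) ∣ φ (b i) := by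
    intro i hi
    have h1 : b i ∈ ((Ideal.span {p ^ c}).comap φ) ^ i := Ideal.pow_right_mono hI i (hb i hi)
    have h2 := Ideal.le_comap_pow φ i h1
    rwa [Ideal.mem_comap, Ideal.span_singleton_pow, Ideal.mem_span_singleton, ← pow_mul] at h2
  suffices ∀ e ≤ c, p ^ e ∣ φ f from this c le_rfl
  intro e
  induction e with
  | zero => simp
  | succ e ih =>
    intro he
    obtain ⟨g, hg⟩ := ih (by omega)
    have hsum : p ^ (e * N + 1) ∣ φ (∑ i ∈ Finset.Icc 1 N, b i * f ^ (N - i)) := by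
      rw [map_sum]
      refine Finset.dvd_sum fun i hi => ?_
      rw [map_mul, map_pow]
      have hfi : p ^ (e * (N - i)) ∣ φ f ^ (N - i) := by
        rw [pow_mul]
        exact pow_dvd_pow_of_dvd ⟨g, hg⟩ _
      refine dvd_trans ?_ (mul_dvd_mul (hbi i hi) hfi)
      rw [← pow_add]
      apply pow_dvd_pow
      obtain ⟨hi1, hiN⟩ := Finset.mem_Icc.1 hi
      obtain ⟨j, rfl⟩ := Nat.exists_eq_add_of_le hiN
      rw [Nat.add_sub_cancel_left]
      nlinarith
    have hpow : p ^ (e * N + 1) ∣ φ f ^ N := by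
      have h0 := congrArg φ heq
      rw [map_add, map_pow, map_zero] at h0
      rw [eq_neg_of_add_eq_zero_left h0]
      exact hsum.neg_right
    rw [hg, mul_pow, ← pow_mul, pow_succ] at hpow
    have hdvd := (mul_dvd_mul_iff_left (pow_ne_zero (e * N) hp.ne_zero)).1 hpow
    rw [hg, pow_succ]
    exact mul_dvd_mul_left _ (hp.dvd_of_dvd_pow hdvd)

section Grading

variable {σ K : Type*} [Fintype σ] [DecidableEq σ] [Field K]

/-- The homomorphism multiplying each variable in `T` by an additional variable. -/
noncomputable def gradingHom (K : Type*) [Field K] (T : Finset σ) :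
    MvPolynomial σ K →+* Polynomial (MvPolynomial σ K) :=
  eval₂Hom (Polynomial.C.comp C)
    (fun i => Polynomial.C (X i) * if i ∈ T then Polynomial.X else 1)

theorem gradingHom_monomial (T : Finset σ) (u : σ →₀ ℕ) (r : K) :
    gradingHom K T (monomial u r) =
      Polynomial.C (monomial u r) * Polynomial.X ^ ∑ i ∈ T, u i := by
  have hT : ∏ i, (if i ∈ T then (Polynomial.X : Polynomial (MvPolynomial σ K)) else 1) ^ u i
      = Polynomial.X ^ ∑ i ∈ T, u i := by
    rw [← Finset.prod_pow_eq_pow_sum, ← Finset.prod_subset (Finset.subset_univ T)]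
    · exact Finset.prod_congr rfl fun i hi => by rw [if_pos hi]
    · intro i _ hi
      rw [if_neg hi, one_pow]
  rw [gradingHom, coe_eval₂Hom, eval₂_monomial, monomial_eq,
    Finsupp.prod_fintype _ _ (by simp), Finsupp.prod_fintype _ _ (by simp)]
  simp only [mul_pow, Finset.prod_mul_distrib, hT, map_mul, map_prod, map_pow,
    RingHom.comp_apply, mul_assoc]

theorem coeff_coeff_gradingHom (T : Finset σ) (f : MvPolynomial σ K) (u : σ →₀ ℕ) :
    coeff u ((gradingHom K T f).coeff (∑ i ∈ T, u i)) = coeff u f := by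
  induction f using MvPolynomial.induction_on' with
  | monomial v r =>
    rw [gradingHom_monomial, Polynomial.coeff_C_mul, Polynomial.coeff_X_pow]
    by_cases hv : v = u
    · simp [hv]
    · split_ifs <;> simp [hv]
  | add p q hp hq => rw [map_add, Polynomial.coeff_add, coeff_add, coeff_add, hp, hq]

/-- The monomials occurring in an element integral over `I ^ k` have degree at least `k * c` in
the variables from `T` if `I` is generated by squarefree monomials of degree at least `c` in
these variables. -/
theorem IsIntegralOverIdeal.le_sum_of_mem_support {𝓑 : Set (Finset σ)} {k : ℕ}
    {f : MvPolynomial σ K}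
    (hf : IsIntegralOverIdeal (Ideal.span ((fun s => ∏ l ∈ s, X l) '' 𝓑) ^ k) f)
    {T : Finset σ} {c : ℕ} (hc : ∀ s ∈ 𝓑, c ≤ (s ∩ T).card) {u : σ →₀ ℕ}
    (hu : u ∈ f.support) : k * c ≤ ∑ i ∈ T, u i := by
  have hle : Ideal.span ((fun s : Finset σ => (∏ l ∈ s, X l : MvPolynomial σ K)) '' 𝓑) ≤
      (Ideal.span {(Polynomial.X : Polynomial (MvPolynomial σ K)) ^ c}).comap
        (gradingHom K T) := by
    rw [Ideal.span_le]
    rintro _ ⟨s, hs, rfl⟩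
    simp only [SetLike.mem_coe, Ideal.mem_comap, Ideal.mem_span_singleton, map_prod]
    simp only [gradingHom, coe_eval₂Hom, eval₂_X, Finset.prod_mul_distrib]
    rw [Finset.prod_ite_mem, Finset.prod_const]
    exact (pow_dvd_pow _ (hc s hs)).mul_left _
  have hdvd := hf.prime_pow_dvd (gradingHom K T) Polynomial.prime_X (c := c * k) <| by
    refine (Ideal.pow_right_mono hle k).trans ((Ideal.le_comap_pow _ k).trans ?_)
    rw [Ideal.span_singleton_pow, pow_mul]
  rw [Polynomial.X_pow_dvd_iff] at hdvd
  by_contra hlt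
  refine mem_support_iff.1 hu ?_
  rw [← coeff_coeff_gradingHom T f u, hdvd _ (by rw [mul_comm c]; omega), coeff_zero]

end Grading

/-- A function on a finite set can be lowered to have any smaller prescribed sum. -/
theorem Finset.exists_le_sum_eq_of_le_sum {ι : Type*} (s : Finset ι) (g : ι → ℕ) {P : ℕ}
    (hP : P ≤ ∑ i ∈ s, g i) : ∃ z : ι → ℕ, (∀ i, z i ≤ g i) ∧ ∑ i ∈ s, z i = P := by
  classical
  induction P with
  | zero => exact ⟨0, by simp, by simp⟩
  | succ P ih =>
    obtain ⟨z, hz, hsum⟩ := ih (by omega)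
    obtain ⟨i, hi, hlt⟩ := Finset.exists_lt_of_sum_lt (s := s) (f := z) (g := g) (by omega)
    refine ⟨z + Pi.single i 1, fun j => ?_, ?_⟩
    · by_cases hj : j = i
      · subst hj
        simp only [Pi.add_apply, Pi.single_eq_same]
        omega
      · simp [hj, hz j]
    · simp [Finset.sum_add_distrib, hsum, Finset.sum_pi_single', hi]

/-- If `z` takes values in `{0, …, k}` and `c` is a rounding of `(∑ i ∈ s, z i) / k`, there is a
subset of `s` of size `c` containing all indices with `z i = k` and only indices with
`z i > 0`. -/
theorem Finset.exists_peeling_subset {ι : Type*} (s : Finset ι) (z : ι → ℕ) {k c : ℕ}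
    (hk : 0 < k) (hz : ∀ i, z i ≤ k) (hlow : k * c < ∑ i ∈ s, z i + k)
    (hupp : ∑ i ∈ s, z i < k * c + k) :
    ∃ B ⊆ s, B.card = c ∧ (∀ i ∈ B, 0 < z i) ∧ ∀ i ∈ s, i ∉ B → z i < k := by
  classical
  have hfull : (s.filter fun i => z i = k).card ≤ c := by
    have h1 : (s.filter fun i => z i = k).card * k ≤ ∑ i ∈ s, z i := by
      refine le_trans ?_ (Finset.sum_le_sum_of_subset (Finset.filter_subset (fun i => z i = k) s))
      rw [← smul_eq_mul]
      exact Finset.card_nsmul_le_sum _ _ _ fun i hi => (Finset.mem_filter.1 hi).2.ge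
    by_contra! hlt
    nlinarith
  have hpos : c ≤ (s.filter fun i => 0 < z i).card := by
    have h1 : ∑ i ∈ s, z i ≤ (s.filter fun i => 0 < z i).card * k := by
      rw [← Finset.sum_filter_of_ne (p := fun i => 0 < z i) fun i _ h => Nat.pos_of_ne_zero h,
        ← smul_eq_mul]
      exact Finset.sum_le_card_nsmul _ _ _ fun i _ => hz i
    by_contra! hlt
    nlinarith
  obtain ⟨B, hB1, hB2, hB3⟩ := Finset.exists_subsuperset_card_eq
    (s := s.filter fun i => z i = k) (t := s.filter fun i => 0 < z i)
    (fun i hi => by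
      rw [Finset.mem_filter] at hi ⊢
      exact ⟨hi.1, hi.2 ▸ hk⟩) hfull hpos
  refine ⟨B, hB2.trans (Finset.filter_subset _ _), hB3,
    fun i hi => (Finset.mem_filter.1 (hB2 hi)).2, fun i his hi => ?_⟩
  exact lt_of_le_of_ne (hz i) fun h => hi (hB1 (Finset.mem_filter.2 ⟨his, h⟩))

section MixedProduct

variable {σ K : Type*} [Fintype σ] [DecidableEq σ] [Field K]

/-- The sets with `h` elements of which at least `a` and at most `A` lie in `V`. -/
def mixedBases (V : Finset σ) (h a A : ℕ) : Set (Finset σ) :=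
  {s | s.card = h ∧ a ≤ (s ∩ V).card ∧ (s ∩ V).card ≤ A}

/-- The ideal generated by the squarefree monomials of degree `h` with degree between `a` and `A`
in the variables from `V`. -/
noncomputable def mixedIdeal (K : Type*) [Field K] (V : Finset σ) (h a A : ℕ) :
    Ideal (MvPolynomial σ K) :=
  Ideal.span ((fun s => ∏ l ∈ s, X l) '' mixedBases V h a A)

theorem prod_X_pow_mem_mixedIdeal_pow (V : Finset σ) {h a A : ℕ} (hAh : A ≤ h) (k : ℕ)
    (z : σ → ℕ) (hz : ∀ i, z i ≤ k) (hlow : k * a ≤ ∑ i ∈ V, z i)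
    (hupp : ∑ i ∈ V, z i ≤ k * A) (hsum : ∑ i ∈ V, z i + ∑ i ∈ Vᶜ, z i = k * h) :
    ∏ i, X i ^ z i ∈ mixedIdeal K V h a A ^ k := by
  induction k generalizing z with
  | zero => simp
  | succ k ih =>
    obtain ⟨c, ρ, hρ, hPc⟩ : ∃ c ρ, ρ < k + 1 ∧ ∑ i ∈ V, z i = (k + 1) * c + ρ :=
      ⟨_ / (k + 1), _ % (k + 1), Nat.mod_lt _ (by omega), (Nat.div_add_mod _ _).symm⟩
    have hac : a ≤ c := by by_contra!; nlinarith
    have hcA : c ≤ A := by by_contra!; nlinarith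
    obtain ⟨d, rfl⟩ := Nat.exists_eq_add_of_le (hcA.trans hAh)
    have hQd : ∑ i ∈ Vᶜ, z i + ρ = (k + 1) * d := by nlinarith
    obtain ⟨B₁, hB₁V, hB₁c, hB₁pos, hB₁full⟩ :=
      V.exists_peeling_subset z (c := c) k.add_one_pos hz (by omega) (by omega)
    obtain ⟨B₂, hB₂V, hB₂c, hB₂pos, hB₂full⟩ :=
      Vᶜ.exists_peeling_subset z (c := d) k.add_one_pos hz (by omega) (by omega)
    obtain ⟨B, hB⟩ : ∃ B, B = B₁ ∪ B₂ := ⟨_, rfl⟩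
    have hdisj : Disjoint B₁ B₂ :=
      Finset.disjoint_of_subset_left hB₁V
        (Finset.disjoint_of_subset_right hB₂V disjoint_compl_right)
    have hBV : V ∩ B = B₁ := by
      ext i
      have h1 := @hB₁V i
      have h2 := @hB₂V i
      simp only [Finset.mem_compl] at h2
      simp only [hB, Finset.mem_inter, Finset.mem_union]
      tauto
    have hBVc : Vᶜ ∩ B = B₂ := by
      ext i
      have h1 := @hB₁V i
      have h2 := @hB₂V i
      simp only [Finset.mem_compl] at h2
      simp only [hB, Finset.mem_inter, Finset.mem_union, Finset.mem_compl]
      tauto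
    have hBcard : B.card = c + d := by
      rw [hB, Finset.card_union_of_disjoint hdisj, hB₁c, hB₂c]
    have hBpos : ∀ i ∈ B, 0 < z i := fun i hi =>
      (Finset.mem_union.1 (hB ▸ hi)).elim (hB₁pos i) (hB₂pos i)
    have hBfull : ∀ i ∉ B, z i < k + 1 := fun i hi => by
      rw [hB, Finset.mem_union, not_or] at hi
      by_cases hiV : i ∈ V
      · exact hB₁full i hiV hi.1
      · exact hB₂full i (Finset.mem_compl.2 hiV) hi.2
    obtain ⟨w, hw⟩ : ∃ w : σ → ℕ, ∀ i, w i + (if i ∈ B then 1 else 0) = z i :=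
      ⟨fun i => z i - if i ∈ B then 1 else 0, fun i => by
        by_cases hi : i ∈ B
        · have := hBpos i hi
          simp only [hi, if_true]
          omega
        · simp [hi]⟩
    have hwsum : ∀ W : Finset σ, ∑ i ∈ W, w i + (W ∩ B).card = ∑ i ∈ W, z i := fun W => by
      rw [← Finset.sum_congr rfl fun i _ => hw i, Finset.sum_add_distrib, Finset.sum_ite_mem,
        Finset.sum_const, smul_eq_mul, mul_one]
    have hwV := hwsum V
    have hwVc := hwsum Vᶜ
    rw [hBV, hB₁c] at hwV
    rw [hBVc, hB₂c] at hwVc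
    have hwmem : ∏ i, X i ^ w i ∈ mixedIdeal K V (c + d) a A ^ k := by
      refine ih w (fun i => ?_) ?_ ?_ ?_
      · have h1 := hw i
        have h2 := hBfull i
        have h3 := hz i
        split_ifs at h1 with hi
        · omega
        · have := h2 hi
          omega
      · nlinarith
      · rcases hcA.eq_or_lt with rfl | hlt
        · nlinarith
        · nlinarith
      · nlinarith
    have hBmem : ∏ i ∈ B, X i ∈ mixedIdeal K V (c + d) a A := by
      refine Ideal.subset_span ⟨B, ⟨hBcard, ?_, ?_⟩, rfl⟩ <;>
        rwa [Finset.inter_comm, hBV, hB₁c]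
    have hprod : ∏ i, X i ^ z i = (∏ i, X i ^ w i) * ∏ i ∈ B, (X i : MvPolynomial σ K) := by
      simp only [← hw, pow_add, Finset.prod_mul_distrib, pow_ite, pow_one, pow_zero,
        Finset.prod_ite_mem, Finset.univ_inter]
    rw [hprod, pow_succ]
    exact Ideal.mul_mem_mul hwmem hBmem

theorem isIntegrallyClosedIdeal_mixedIdeal_pow (V : Finset σ) {h a A : ℕ} (haA : a ≤ A)
    (hAh : A ≤ h) (k : ℕ) : IsIntegrallyClosedIdeal (mixedIdeal K V h a A ^ k) := by
  intro f hf
  have key : ∀ u ∈ f.support, ∀ (W : Finset σ) (e : ℕ),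
      (∀ s ∈ mixedBases V h a A, e ≤ (s ∩ W).card) → k * e ≤ ∑ i ∈ W, min (u i) k := by
    intro u hu W e he
    set T := W.filter fun i => u i < k with hT
    set F := W.filter fun i => ¬ u i < k with hF
    have hle := hf.le_sum_of_mem_support (T := T) (c := e - F.card) (fun s hs => by
      have h1 := he s hs
      have h2 : (s ∩ W).card ≤ (s ∩ T).card + F.card := by
        refine le_trans (Finset.card_le_card fun i hi => ?_) (Finset.card_union_le _ _)
        simp only [hT, hF, Finset.mem_union, Finset.mem_inter, Finset.mem_filter] at hi ⊢
        tauto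
      omega) hu
    have hTsum : ∑ i ∈ T, min (u i) k = ∑ i ∈ T, u i :=
      Finset.sum_congr rfl fun i hi => min_eq_left (Finset.mem_filter.1 hi).2.le
    have hFsum : ∑ i ∈ F, min (u i) k = F.card * k := by
      rw [Finset.sum_congr rfl fun i hi => min_eq_right (not_lt.1 (Finset.mem_filter.1 hi).2),
        Finset.sum_const, smul_eq_mul]
    rw [← Finset.sum_filter_add_sum_filter_not W (fun i => u i < k), hTsum, hFsum]
    have h3 : e ≤ (e - F.card) + F.card := by omega
    nlinarith
  rw [f.as_sum]
  refine Ideal.sum_mem _ fun u hu => ?_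
  have hV := key u hu V a fun s hs => hs.2.1
  have hVc := key u hu Vᶜ (h - A) fun s hs => by
    have h1 := Finset.card_inter_add_card_sdiff s V
    rw [← Finset.sdiff_eq_inter_compl]
    have h2 := hs.1
    have h3 := hs.2.2
    omega
  have hall := key u hu Finset.univ h fun s hs => by rw [Finset.inter_univ, hs.1]
  rw [← Finset.sum_add_sum_compl V] at hall
  obtain ⟨P, Q, hPk, hPA, hPa, hQ, hPQ⟩ : ∃ P Q, P ≤ ∑ i ∈ V, min (u i) k ∧ P ≤ k * A ∧
      k * a ≤ P ∧ Q ≤ ∑ i ∈ Vᶜ, min (u i) k ∧ P + Q = k * h := by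
    have h1 : k * (h - A) + k * A = k * h := by rw [← mul_add, Nat.sub_add_cancel hAh]
    have h2 : k * a ≤ k * A := Nat.mul_le_mul_left k haA
    refine ⟨min (∑ i ∈ V, min (u i) k) (k * A), k * h - min (∑ i ∈ V, min (u i) k) (k * A), ?_⟩
    omega
  obtain ⟨z₁, hz₁, hs₁⟩ := V.exists_le_sum_eq_of_le_sum _ hPk
  obtain ⟨z₂, hz₂, hs₂⟩ := Vᶜ.exists_le_sum_eq_of_le_sum _ hQ
  set z : σ → ℕ := fun i => if i ∈ V then z₁ i else z₂ i with hzdef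
  have hzu : ∀ i, z i ≤ min (u i) k := fun i => by
    simp only [hzdef]
    split_ifs
    exacts [hz₁ i, hz₂ i]
  have hzV : ∑ i ∈ V, z i = P := by
    rw [← hs₁]
    exact Finset.sum_congr rfl fun i hi => if_pos hi
  have hzVc : ∑ i ∈ Vᶜ, z i = Q := by
    rw [← hs₂]
    exact Finset.sum_congr rfl fun i hi => if_neg (Finset.mem_compl.1 hi)
  have hmem := prod_X_pow_mem_mixedIdeal_pow (K := K) (a := a) V hAh k z
    (fun i => (hzu i).trans (min_le_right _ _)) (by omega) (by omega) (by omega)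
  rw [monomial_eq, Finsupp.prod_fintype _ _ (by simp)]
  refine Ideal.mul_mem_left _ _ (Ideal.mem_of_dvd _ ?_ hmem)
  exact Finset.prod_dvd_prod_of_dvd _ _ fun i _ =>
    pow_dvd_pow _ ((hzu i).trans (min_le_left _ _))

end MixedProduct

/-- The ideal `L` of `K[x_1,…,x_n,y_1,…,y_m]` generated by all squarefree monomials of
total degree `h` whose degree in the `x`-variables lies between `a` and `A`
(i.e. `L = ∑_r I_{a_r} J_{b_r}` with consecutive degrees and constant sum `h`) is normal:
all its powers are integrally closed. -/
theorem generalized_mixed_product_normal (K : Type*) [Field K] (n m h a A : ℕ)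
    (hn : 1 ≤ n) (hm : 1 ≤ m) (hh : 1 ≤ h) (haA : a ≤ A) (han : a ≤ n) (hAn : A ≤ n)
    (hAh : A ≤ h) (ham : h ≤ a + m)
    (L : Ideal (MvPolynomial (Fin n ⊕ Fin m) K))
    (hL : L = Ideal.span {f | ∃ s : Finset (Fin n ⊕ Fin m),
        s.card = h ∧
        a ≤ (s.filter fun l => l.isLeft = true).card ∧
        (s.filter fun l => l.isLeft = true).card ≤ A ∧
        f = ∏ l ∈ s, X l}) :
    ∀ k : ℕ, 1 ≤ k → IsIntegrallyClosedIdeal (L ^ k) := by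
  subst hL
  intro k _
  convert isIntegrallyClosedIdeal_mixedIdeal_pow (K := K)
    (Finset.univ.filter fun l : Fin n ⊕ Fin m => l.isLeft = true) haA hAh k using 2
  unfold mixedIdeal
  congr 1
  ext f
  simp only [mixedBases, Set.mem_ofPred_eq, Set.mem_image, Finset.inter_filter, Finset.inter_univ]
  constructor
  · rintro ⟨s, h1, h2, h3, rfl⟩
    exact ⟨s, ⟨h1, h2, h3⟩, rfl⟩
  · rintro ⟨s, ⟨h1, h2, h3⟩, rfl⟩
    exact ⟨s, h1, h2, h3, rfl⟩
end

section
/- Let K be a field, let n, m ≥ 1 and let s, t be integers with 2 ≤ s, s + 1 ≤ n, t ≥ 1 and r = s + t ≤ m. Let L be the ideal of S = K[x_1,…,x_n,y_1,…,y_m] equal to J_r + I_s·J_t, i.e., generated by all squarefree monomials of degree r in the y-variables together with all products of a squarefree monomial of degree s in the x-variables with a squarefree monomial of degree t in the y-variables. Then the monomial f = x_1⋯x_{s+1}·y_1^2⋯y_{t−1}^2·y_t⋯y_r is integral over L^2 but f ∉ L^2; in particular L^2 is not integrally closed. -/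
open MvPolynomial

theorem isIntegralOverIdeal_of_pow_mem {R : Type*} [CommRing R] {I : Ideal R} {f : R} {N : ℕ}
    (hN : 0 < N) (h : f ^ N ∈ I ^ N) : IsIntegralOverIdeal I f := by
  refine ⟨N, hN, fun i => if i = N then -f ^ N else 0, fun i _ => ?_, ?_⟩
  · dsimp only
    split_ifs with hi
    · rw [hi]
      exact neg_mem h
    · exact zero_mem _
  · rw [Finset.sum_eq_single_of_mem N (Finset.mem_Icc.2 ⟨hN, le_rfl⟩)]
    · simp
    · intro i _ hi
      simp [hi]

/-- The product of all subproducts omitting exactly one factor. -/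
theorem prod_prod_univ_erase {R : Type*} [CommMonoid R] {s : ℕ} (x : Fin (s + 1) → R) :
    ∏ i, ∏ k ∈ Finset.univ.erase i, x k = (∏ k, x k) ^ s := by
  rw [Finset.prod_comm' (t' := Finset.univ) (s' := fun k => Finset.univ.erase k)
    (by simp [eq_comm])]
  simp [Finset.prod_pow]

/-- If `p z` and all `x₀ ⋯ x̂ᵢ ⋯ xₛ p zᵢ` lie in `L`, where `z = z₀ ⋯ zₛ`, then the `s`-th power of
`x₀ ⋯ xₛ p² z` lies in `L ^ (2 * s)`. -/
theorem mul_sq_mul_pow_mem {R : Type*} [CommRing R] {L : Ideal R} {s : ℕ} (hs : 1 ≤ s)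
    (x z : Fin (s + 1) → R) (p : R) (ha : p * ∏ i, z i ∈ L)
    (hb : ∀ i, (∏ k ∈ Finset.univ.erase i, x k) * (p * z i) ∈ L) :
    ((∏ i, x i) * (p ^ 2 * ∏ i, z i)) ^ s ∈ (L ^ 2) ^ s := by
  have hprod : ∏ i, ((∏ k ∈ Finset.univ.erase i, x k) * (p * z i)) ∈ L ^ (s + 1) := by
    simpa using Ideal.prod_mem_prod (s := Finset.univ) (I := fun _ => L) fun i _ => hb i
  have hmul := Ideal.mul_mem_mul (Ideal.pow_mem_pow ha (s - 1)) hprod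
  obtain ⟨k, rfl⟩ : ∃ k, s = k + 1 := ⟨s - 1, by omega⟩
  rw [← pow_add, show k + 1 - 1 + (k + 1 + 1) = 2 * (k + 1) by omega, pow_mul] at hmul
  convert hmul using 1
  rw [Finset.prod_mul_distrib, prod_prod_univ_erase, Finset.prod_mul_distrib]
  simp only [Finset.prod_const, Finset.card_univ, Fintype.card_fin, Nat.add_sub_cancel]
  ring

/-- A monomial of low degree in both variables is outside the square of `(v^(s+t), u^s v^t)`. -/
theorem X_pow_mul_X_pow_notMem_sq (K : Type*) [Field K] {s t a b : ℕ} (ha : a < 2 * s)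
    (hb : b < s + 2 * t) :
    (X 0 ^ a * X 1 ^ b : MvPolynomial (Fin 2) K) ∉
      (Ideal.span {X 1 ^ (s + t), X 0 ^ s * X 1 ^ t} : Ideal (MvPolynomial (Fin 2) K)) ^ 2 := by
  intro h
  have hle : (Ideal.span {X 1 ^ (s + t), X 0 ^ s * X 1 ^ t} : Ideal (MvPolynomial (Fin 2) K)) ^ 2 ≤
      Ideal.span ((fun e => monomial e (1 : K)) ''
        {Finsupp.single 0 (2 * s), Finsupp.single 1 (s + 2 * t)}) := by
    have hu : (X 0 ^ (2 * s) : MvPolynomial (Fin 2) K) ∈ Ideal.span ((fun e => monomial e (1 : K)) ''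
        {Finsupp.single 0 (2 * s), Finsupp.single 1 (s + 2 * t)}) :=
      Ideal.subset_span ⟨_, Or.inl rfl, (X_pow_eq_monomial).symm⟩
    have hv : (X 1 ^ (s + 2 * t) : MvPolynomial (Fin 2) K) ∈
        Ideal.span ((fun e => monomial e (1 : K)) ''
        {Finsupp.single 0 (2 * s), Finsupp.single 1 (s + 2 * t)}) :=
      Ideal.subset_span ⟨_, Or.inr rfl, (X_pow_eq_monomial).symm⟩
    rw [pow_two, Ideal.span_mul_span', Ideal.span_le]
    rintro _ ⟨p, hp, q, hq, rfl⟩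
    rcases hp with rfl | rfl <;> rcases hq with rfl | rfl
    · exact Ideal.mem_of_dvd _ ⟨X 1 ^ s, by ring⟩ hv
    · exact Ideal.mem_of_dvd _ ⟨X 0 ^ s, by ring⟩ hv
    · exact Ideal.mem_of_dvd _ ⟨X 0 ^ s, by ring⟩ hv
    · exact Ideal.mem_of_dvd _ ⟨X 1 ^ (2 * t), by ring⟩ hu
  have hmem := hle h
  rw [mem_ideal_span_monomial_image] at hmem
  have hsupp : Finsupp.single 0 a + Finsupp.single 1 b ∈
      (X 0 ^ a * X 1 ^ b : MvPolynomial (Fin 2) K).support := by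
    simp [X_pow_eq_monomial, monomial_mul, mem_support_iff]
  obtain ⟨e, he, hle⟩ := hmem _ hsupp
  rcases he with rfl | rfl
  · have := hle 0
    simp at this
    omega
  · have := hle 1
    simp at this
    omega

/-- For `L = J_r + I_s J_t` with `2 ≤ s`, `s + 1 ≤ n`, `t ≥ 1`, `r = s + t ≤ m`, the
monomial `f = x_1⋯x_{s+1} y_1^2⋯y_{t-1}^2 y_t⋯y_r` is integral over `L^2` but does not
belong to `L^2`; in particular `L^2` is not integrally closed. -/
theorem Jr_plus_IsJt_square_not_integrally_closed (K : Type*) [Field K]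
    (n m s t r : ℕ) (hn : 1 ≤ n) (hm : 1 ≤ m)
    (hs : 2 ≤ s) (hsn : s + 1 ≤ n) (ht : 1 ≤ t) (hr : r = s + t) (hrm : r ≤ m)
    (L : Ideal (MvPolynomial (Fin n ⊕ Fin m) K))
    (hL : L = Ideal.span
        ({g | ∃ sy : Finset (Fin m), sy.card = r ∧ g = ∏ j ∈ sy, X (Sum.inr j)} ∪
         {g | ∃ sx : Finset (Fin n), ∃ sy : Finset (Fin m), sx.card = s ∧ sy.card = t ∧
            g = (∏ i ∈ sx, X (Sum.inl i)) * ∏ j ∈ sy, X (Sum.inr j)}))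
    (f : MvPolynomial (Fin n ⊕ Fin m) K)
    (hf : f = (∏ i : Fin n, X (Sum.inl i) ^ (if (i : ℕ) < s + 1 then 1 else 0)) *
        ∏ j : Fin m, X (Sum.inr j) ^
          (if (j : ℕ) < t - 1 then 2 else if (j : ℕ) < r then 1 else 0)) :
    IsIntegralOverIdeal (L ^ 2) f ∧ f ∉ L ^ 2 ∧ ¬ IsIntegrallyClosedIdeal (L ^ 2) := by
  have hint : IsIntegralOverIdeal (L ^ 2) f := by
    apply isIntegralOverIdeal_of_pow_mem (N := s) (by omega)
    let ex : Fin (s + 1) ↪ Fin n := Fin.castLEEmb hsn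
    let ez : Fin (s + 1) ↪ Fin m :=
      ⟨fun i => ⟨t - 1 + i, by omega⟩, fun i j h => by simpa [Fin.ext_iff] using h⟩
    have hez (i : Fin (s + 1)) : (ez i : ℕ) = t - 1 + i := rfl
    let Y : Finset (Fin m) := Finset.univ.filter fun j => (j : ℕ) < t - 1
    have hY : Y.card = t - 1 := by
      simp only [Y, Fin.card_filter_val_lt]
      omega
    have hYz (i : Fin (s + 1)) : ez i ∉ Y := by simp [Y, hez]
    have hdisj : Disjoint Y (Finset.univ.map ez) := by
      rw [Finset.disjoint_right]
      simpa using hYz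
    have hf' : f = (∏ i, X (Sum.inl (ex i))) *
        ((∏ j ∈ Y, X (Sum.inr j)) ^ 2 * ∏ i, X (Sum.inr (ez i))) := by
      rw [hf]
      congr 1
      · rw [← Finset.prod_map Finset.univ ex (fun i => (X (Sum.inl i) : MvPolynomial _ K))]
        simp only [pow_ite, pow_one, pow_zero]
        rw [← Finset.prod_filter]
        congr 1
        ext i
        simp only [Finset.mem_filter, Finset.mem_univ, true_and, Finset.mem_map]
        exact ⟨fun h => ⟨⟨i, h⟩, rfl⟩, by rintro ⟨k, rfl⟩; exact k.2⟩
      · rw [← Finset.prod_map Finset.univ ez (fun i => (X (Sum.inr i) : MvPolynomial _ K)),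
          ← Finset.prod_pow, ← Finset.prod_filter_mul_prod_filter_not Finset.univ
            (fun j : Fin m => (j : ℕ) < t - 1)]
        congr 1
        · refine Finset.prod_congr rfl fun j hj => ?_
          rw [if_pos (Finset.mem_filter.1 hj).2]
        · symm
          refine Finset.prod_subset_one_on_sdiff ?_ ?_ ?_
          · intro j hj
            obtain ⟨k, -, rfl⟩ := Finset.mem_map.1 hj
            simp only [Finset.mem_filter, Finset.mem_univ, true_and, hez]
            omega
          · intro j hj
            simp only [Finset.mem_sdiff, Finset.mem_filter, Finset.mem_univ, true_and,
              Finset.mem_map, not_exists] at hj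
            rw [if_neg hj.1, if_neg, pow_zero]
            intro hjr
            refine hj.2 ⟨j - (t - 1), by omega⟩ (Fin.ext ?_)
            rw [hez]
            dsimp only
            omega
          · intro j hj
            obtain ⟨k, -, rfl⟩ := Finset.mem_map.1 hj
            have hk := k.2
            rw [hez, if_neg (by omega), if_pos (by omega), pow_one]
    rw [hf']
    refine mul_sq_mul_pow_mem (by omega) _ _ _ ?_ fun i => ?_
    · rw [hL]
      refine Ideal.subset_span (Or.inl ⟨Y.disjUnion (Finset.univ.map ez) hdisj, ?_, ?_⟩)
      · rw [Finset.card_disjUnion, hY, Finset.card_map, Finset.card_univ, Fintype.card_fin]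
        omega
      · rw [Finset.prod_disjUnion, Finset.prod_map]
    · rw [hL]
      refine Ideal.subset_span (Or.inr ⟨(Finset.univ.erase i).map ex, Y.cons (ez i) (hYz i),
        ?_, ?_, ?_⟩)
      · simp
      · rw [Finset.card_cons, hY]
        omega
      · rw [Finset.prod_map, Finset.prod_cons, mul_comm (X (Sum.inr (ez i)))]
  have hnot : f ∉ L ^ 2 := by
    intro hmem
    let φ : MvPolynomial (Fin n ⊕ Fin m) K →ₐ[K] MvPolynomial (Fin 2) K :=
      aeval (Sum.elim (fun _ => X 0) (fun _ => X 1))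
    have hφL : L.map φ ≤ Ideal.span {X 1 ^ (s + t), X 0 ^ s * X 1 ^ t} := by
      rw [hL, Ideal.map_span, Ideal.span_le]
      rintro _ ⟨g, ⟨sy, hsy, rfl⟩ | ⟨sx, sy, hsx, hsy, rfl⟩, rfl⟩
      · exact Ideal.subset_span (Or.inl (by simp [φ, hsy, hr]))
      · exact Ideal.subset_span (Or.inr (by simp [φ, hsx, hsy]))
    have hφf : φ f = X 0 ^ (s + 1) * X 1 ^ (2 * (t - 1) + (s + 1)) := by
      have hx : ∑ i : Fin n, (if (i : ℕ) < s + 1 then 1 else 0) = s + 1 := by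
        rw [← Finset.sum_filter, ← Finset.card_eq_sum_ones, Fin.card_filter_val_lt]
        omega
      have hy : ∑ j : Fin m, (if (j : ℕ) < t - 1 then 2 else if (j : ℕ) < r then 1 else 0) =
          2 * (t - 1) + (s + 1) := by
        have hsplit (j : Fin m) : (if (j : ℕ) < t - 1 then 2 else if (j : ℕ) < r then 1 else 0) =
            (if (j : ℕ) < t - 1 then 1 else 0) + (if (j : ℕ) < r then 1 else 0) := by
          split_ifs <;> omega
        simp only [hsplit, Finset.sum_add_distrib]
        rw [← Finset.sum_filter, ← Finset.sum_filter, ← Finset.card_eq_sum_ones,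
          ← Finset.card_eq_sum_ones, Fin.card_filter_val_lt, Fin.card_filter_val_lt]
        omega
      rw [hf, map_mul, map_prod, map_prod]
      simp only [φ, map_pow, aeval_X, Sum.elim_inl, Sum.elim_inr]
      rw [Finset.prod_pow_eq_pow_sum, Finset.prod_pow_eq_pow_sum, hx, hy]
    refine X_pow_mul_X_pow_notMem_sq K (s := s) (t := t) (a := s + 1)
      (b := 2 * (t - 1) + (s + 1)) (by omega) (by omega) ?_
    rw [← hφf]
    have hφmem := Ideal.mem_map_of_mem φ hmem
    rw [Ideal.map_pow] at hφmem
    exact Ideal.pow_right_mono hφL 2 hφmem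
  exact ⟨hint, hnot, fun h => hnot (h f hint)⟩
end

section
/- Let K be a field, let n, m > 1 and let h be an integer with 2 ≤ h ≤ n + m − 1. Let L be the ideal of S = K[x_1,…,x_n,y_1,…,y_m] generated by all squarefree monomials of total degree h that involve at least one x-variable and at least one y-variable (equivalently, L = ∑_{r=1}^{h−1} I_r J_{h−r}, where I_c is the squarefree Veronese ideal of degree c in the x-variables and J_d that of degree d in the y-variables). Then L has linear quotients. -/
open MvPolynomial

/-- A monomial ideal `L` has linear quotients: its minimal monomial generators can be
ordered `u_0, …, u_{q-1}` (they are monic monomials, none dividing another, and they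
generate `L`) so that each colon ideal `(u_0, …, u_{i-1}) : (u_i)` is generated by a
subset of the variables. -/
def HasLinearQuotients {σ : Type*} {K : Type*} [CommRing K]
    (L : Ideal (MvPolynomial σ K)) : Prop :=
  ∃ (q : ℕ) (u : Fin q → MvPolynomial σ K),
    Function.Injective u ∧
    Ideal.span (Set.range u) = L ∧
    (∀ i, ∃ d : σ →₀ ℕ, u i = monomial d 1) ∧
    (∀ i j, i ≠ j → ¬ u i ∣ u j) ∧
    ∀ i : Fin q, ∃ V : Set σ,
      Submodule.colon (Ideal.span (u '' {j | j < i})) (Ideal.span {u i}) =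
        Ideal.span (X '' V)

/-- The product of the variables in `s`, as a monomial. -/
theorem prod_X_eq_monomial_sum_single {σ K : Type*} [CommRing K] (s : Finset σ) :
    ∏ l ∈ s, (X l : MvPolynomial σ K) = monomial (∑ l ∈ s, Finsupp.single l 1) 1 := by
  rw [monomial_sum_one]
  rfl

theorem sum_single_one_apply {σ : Type*} [DecidableEq σ] (s : Finset σ) (a : σ) :
    (∑ l ∈ s, Finsupp.single l 1 : σ →₀ ℕ) a = if a ∈ s then 1 else 0 := by
  simp [Finsupp.finsetSum_apply, Finsupp.single_apply]

theorem sum_single_one_le_iff {σ : Type*} {s t : Finset σ} :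
    (∑ l ∈ s, Finsupp.single l 1 : σ →₀ ℕ) ≤ ∑ l ∈ t, Finsupp.single l 1 ↔ s ⊆ t := by
  classical
  refine ⟨fun hle a ha => ?_, fun hst => Finset.sum_le_sum_of_subset hst⟩
  have := hle a
  by_contra hat
  simp [sum_single_one_apply, ha, hat] at this

theorem prod_X_dvd_prod_X_iff {σ K : Type*} [Field K] {s t : Finset σ} :
    ∏ l ∈ s, (X l : MvPolynomial σ K) ∣ ∏ l ∈ t, X l ↔ s ⊆ t := by
  rw [prod_X_eq_monomial_sum_single, prod_X_eq_monomial_sum_single, monomial_dvd_monomial]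
  simp [sum_single_one_le_iff]

/-- If every set of variables in `P` contributes to `B` a variable `a` with `X a * u_B ∈ (P)`,
then the colon ideal of `P` by `u_B` is generated by variables. -/
theorem colon_span_prod_X_eq_span_X {σ K : Type*} [Field K] [DecidableEq σ]
    (P : Set (Finset σ)) (B : Finset σ)
    (hP : ∀ A ∈ P, ∃ a ∈ A, a ∉ B ∧
      X a * ∏ l ∈ B, X l ∈ Ideal.span ((fun s => ∏ l ∈ s, (X l : MvPolynomial σ K)) '' P)) :
    ∃ V : Set σ,
      Submodule.colon (Ideal.span ((fun s => ∏ l ∈ s, (X l : MvPolynomial σ K)) '' P))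
        (Ideal.span {∏ l ∈ B, (X l : MvPolynomial σ K)}) = Ideal.span (X '' V) := by
  refine ⟨{a | X a * ∏ l ∈ B, X l ∈
    Ideal.span ((fun s => ∏ l ∈ s, (X l : MvPolynomial σ K)) '' P)}, le_antisymm ?_ ?_⟩
  · intro f hf
    have hfB := Submodule.mem_colon.1 hf _ (Ideal.mem_span_singleton_self _)
    have himage : (fun s => ∏ l ∈ s, (X l : MvPolynomial σ K)) '' P =
        (fun d => monomial d (1 : K)) ''
          ((fun s : Finset σ => ∑ l ∈ s, Finsupp.single l 1) '' P) := by
      rw [Set.image_image]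
      simp only [prod_X_eq_monomial_sum_single]
    rw [smul_eq_mul, himage, mem_ideal_span_monomial_image,
      prod_X_eq_monomial_sum_single] at hfB
    rw [mem_ideal_span_X_image]
    intro d hd
    obtain ⟨_, ⟨A, hA, rfl⟩, hle⟩ := hfB (d + ∑ l ∈ B, Finsupp.single l 1) (by
      rw [mem_support_iff, coeff_mul_monomial, mul_one]
      exact mem_support_iff.1 hd)
    obtain ⟨a, haA, haB, ha⟩ := hP A hA
    refine ⟨a, ha, fun hda => ?_⟩
    have := hle a
    rw [Finsupp.add_apply, sum_single_one_apply, sum_single_one_apply] at this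
    simp [haA, haB, hda] at this
  · rw [Ideal.span_le]
    rintro _ ⟨a, ha, rfl⟩
    refine Submodule.mem_colon.2 fun p hp => ?_
    obtain ⟨g, rfl⟩ := Ideal.mem_span_singleton'.1 hp
    rw [smul_eq_mul, mul_left_comm]
    exact Ideal.mul_mem_left _ _ ha

/-- The ideal generated by the squarefree monomials supported on the bases of a matroid (a family
of equicardinal sets with the exchange property) has linear quotients. -/
theorem hasLinearQuotients_of_exchange {σ K : Type*} [Field K] [LinearOrder σ]
    (F : Finset (Finset σ)) (h : ℕ) (hcard : ∀ s ∈ F, s.card = h)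
    (hexch : ∀ B ∈ F, ∀ A ∈ F, ∀ b ∈ B, b ∉ A →
      ∃ a ∈ A, a ∉ B ∧ insert a (B.erase b) ∈ F) :
    HasLinearQuotients
      (Ideal.span ((fun s => ∏ l ∈ s, (X l : MvPolynomial σ K)) '' (F : Set (Finset σ)))) := by
  let e := (F.map toColex.toEmbedding).orderIsoOfFin rfl
  let w : Fin (F.map toColex.toEmbedding).card → Finset σ := fun i => ofColex (e i).1
  have hwF : ∀ i, w i ∈ F := fun i => by
    obtain ⟨s, hs, hse⟩ := Finset.mem_map.1 (e i).2
    simpa [w, ← hse] using hs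
  have hwlt : ∀ i j, toColex (w i) < toColex (w j) ↔ i < j := fun i j => e.lt_iff_lt
  have hwsurj : ∀ s ∈ F, ∃ i, w i = s := fun s hs =>
    ⟨e.symm ⟨toColex s, Finset.mem_map_of_mem _ hs⟩, by simp [w]⟩
  have hwinj : Function.Injective w := fun i j hij => by
    rcases lt_trichotomy i j with hlt | heq | hlt
    · exact absurd ((hwlt i j).2 hlt) (by simp [hij])
    · exact heq
    · exact absurd ((hwlt j i).2 hlt) (by simp [hij])
  have hdvd : ∀ i j, i ≠ j →
      ¬ ∏ l ∈ w i, (X l : MvPolynomial σ K) ∣ ∏ l ∈ w j, X l := fun i j hij hd =>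
    hij <| hwinj <| Finset.eq_of_subset_of_card_le (prod_X_dvd_prod_X_iff.1 hd)
      (by rw [hcard _ (hwF i), hcard _ (hwF j)])
  refine ⟨_, fun i => ∏ l ∈ w i, X l, fun i j hij => ?_, ?_, fun i => ?_, hdvd, fun i => ?_⟩
  · by_contra hne
    exact hdvd i j hne (dvd_of_eq hij)
  · have hrange : Set.range w = F := by
      ext s
      exact ⟨fun ⟨i, hi⟩ => hi ▸ hwF i, hwsurj s⟩
    rw [← hrange, ← Set.range_comp]
    rfl
  · exact ⟨_, prod_X_eq_monomial_sum_single _⟩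
  · have hcolon := colon_span_prod_X_eq_span_X (K := K) (w '' {j | j < i}) (w i) ?_
    · rwa [Set.image_image] at hcolon
    rintro _ ⟨j, hj, rfl⟩
    obtain ⟨b, hbi, hbj, hb⟩ :=
      Finset.Colex.toColex_lt_toColex_iff_exists_forall_lt.1 ((hwlt j i).2 hj)
    obtain ⟨a, haj, hai, ha⟩ := hexch _ (hwF i) _ (hwF j) b hbi hbj
    refine ⟨a, haj, hai, ?_⟩
    obtain ⟨k, hk⟩ := hwsurj _ ha
    have hba : b ≠ a := fun hba => hai (hba ▸ hbi)
    have hki : k < i := by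
      rw [← hwlt, hk, Finset.Colex.toColex_lt_toColex_iff_exists_forall_lt]
      refine ⟨b, hbi, by simp [hba], fun c hc hci => ?_⟩
      rcases Finset.mem_insert.1 hc with rfl | hc
      · exact hb _ haj hai
      · exact absurd (Finset.mem_of_mem_erase hc) hci
    have hprod : X a * ∏ l ∈ w i, (X l : MvPolynomial σ K) = X b * ∏ l ∈ w k, X l := by
      rw [hk, Finset.prod_insert (by simp [hai]), ← Finset.mul_prod_erase _ _ hbi]
      ring
    rw [hprod]
    exact Ideal.mul_mem_left _ _ (Ideal.subset_span ⟨_, ⟨k, hki, rfl⟩, rfl⟩)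

/-- The equicardinal sets meeting both summands of `α ⊕ β` have the exchange property. -/
theorem exists_exchange_of_meets_both {α β : Type*} [DecidableEq (α ⊕ β)]
    {A B : Finset (α ⊕ β)} (hcard : B.card = A.card)
    (hAl : ∃ i, Sum.inl i ∈ A) (hAr : ∃ j, Sum.inr j ∈ A)
    (hBl : ∃ i, Sum.inl i ∈ B) (hBr : ∃ j, Sum.inr j ∈ B)
    {b : α ⊕ β} (hbB : b ∈ B) (hbA : b ∉ A) :
    ∃ a ∈ A, a ∉ B ∧ (insert a (B.erase b)).card = B.card ∧
      (∃ i, Sum.inl i ∈ insert a (B.erase b)) ∧ ∃ j, Sum.inr j ∈ insert a (B.erase b) := by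
  have hins : ∀ a, a ∉ B → (insert a (B.erase b)).card = B.card := fun a ha => by
    rw [Finset.card_insert_of_notMem (by simp [ha]), Finset.card_erase_add_one hbB]
  obtain ⟨a, haA, haB⟩ : ∃ a ∈ A, a ∉ B := by
    by_contra! hsub
    exact hbA ((Finset.eq_of_subset_of_card_le hsub hcard.le) ▸ hbB)
  obtain ⟨i, hi⟩ := hAl
  obtain ⟨j, hj⟩ := hAr
  obtain ⟨i', hi'⟩ := hBl
  obtain ⟨j', hj'⟩ := hBr
  by_cases hl : ∃ k, Sum.inl k ∈ B.erase b
  · by_cases hr : ∃ k, Sum.inr k ∈ B.erase b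
    · exact ⟨a, haA, haB, hins a haB, hl.imp fun _ => Finset.mem_insert_of_mem,
        hr.imp fun _ => Finset.mem_insert_of_mem⟩
    · have hjB : Sum.inr j ∉ B := fun hjB =>
        hr ⟨j, Finset.mem_erase.2 ⟨fun hjb => hbA (hjb ▸ hj), hjB⟩⟩
      exact ⟨_, hj, hjB, hins _ hjB, hl.imp fun _ => Finset.mem_insert_of_mem,
        j, Finset.mem_insert_self _ _⟩
  · have hiB : Sum.inl i ∉ B := fun hiB =>
      hl ⟨i, Finset.mem_erase.2 ⟨fun hib => hbA (hib ▸ hi), hiB⟩⟩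
    have hbi : Sum.inl i' = b := by
      by_contra hne
      exact hl ⟨i', Finset.mem_erase.2 ⟨hne, hi'⟩⟩
    exact ⟨_, hi, hiB, hins _ hiB, ⟨i, Finset.mem_insert_self _ _⟩,
      j', Finset.mem_insert_of_mem (Finset.mem_erase.2 ⟨by simp [← hbi], hj'⟩)⟩

/-- The ideal of `K[x_1,…,x_n,y_1,…,y_m]` generated by all squarefree monomials of total
degree `h` involving at least one `x`-variable and at least one `y`-variable
(i.e. `L = ∑_{r=1}^{h-1} I_r J_{h-r}`) has linear quotients. -/
theorem mixed_squarefree_veronese_linear_quotients (K : Type*) [Field K]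
    (n m h : ℕ) (hn : 1 < n) (hm : 1 < m) (hh : 2 ≤ h) (hhnm : h ≤ n + m - 1)
    (L : Ideal (MvPolynomial (Fin n ⊕ Fin m) K))
    (hL : L = Ideal.span {f | ∃ s : Finset (Fin n ⊕ Fin m),
        s.card = h ∧ (∃ i : Fin n, Sum.inl i ∈ s) ∧ (∃ j : Fin m, Sum.inr j ∈ s) ∧
        f = ∏ l ∈ s, X l}) :
    HasLinearQuotients L := by
  classical
  let _ : LinearOrder (Fin n ⊕ Fin m) :=
    LinearOrder.lift' (toLex : Fin n ⊕ Fin m → Fin n ⊕ₗ Fin m) toLex.injective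
  have key := hasLinearQuotients_of_exchange (K := K)
    (Finset.univ.filter fun s : Finset (Fin n ⊕ Fin m) =>
      s.card = h ∧ (∃ i : Fin n, Sum.inl i ∈ s) ∧ ∃ j : Fin m, Sum.inr j ∈ s) h
    (fun s hs => (Finset.mem_filter.1 hs).2.1) (fun B hB A hA b hbB hbA => by
      obtain ⟨-, hBc, hBl, hBr⟩ := Finset.mem_filter.1 hB
      obtain ⟨-, hAc, hAl, hAr⟩ := Finset.mem_filter.1 hA
      obtain ⟨a, haA, haB, hc, hlr⟩ :=
        @exists_exchange_of_meets_both _ _ LinearOrder.toDecidableEq _ _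
          (hBc.trans hAc.symm) hAl hAr hBl hBr b hbB hbA
      exact ⟨a, haA, haB, Finset.mem_filter.2 ⟨Finset.mem_univ _, hc.trans hBc, hlr⟩⟩)
  convert key using 1
  rw [hL]
  congr 1
  ext f
  simp [and_assoc, eq_comm]
end

section
/- Let G be the complete bipartite graph on the vertex set Fin n ⊕ Fin m (left vertices form one part, right vertices the other, and two vertices are adjacent exactly when they lie in different parts). (1) For q ≥ 1 with q ≤ n and q ≤ m, a finite set S of vertices is the vertex set of some path in G with 2q vertices (a walk visiting 2q pairwise distinct vertices) if and only if S contains exactly q left vertices and exactly q right vertices. (2) For q ≥ 1, a finite set S of vertices is the vertex set of some path in G with 2q+1 vertices if and only if (|S ∩ left|, |S ∩ right|) equals (q, q+1) or (q+1, q) (with the corresponding bounds q+1 ≤ n, q ≤ m, resp. q ≤ n, q+1 ≤ m). Consequently, the path ideal I_t(G) equals I_q J_q when t = 2q and I_q J_{q+1} + I_{q+1} J_q when t = 2q+1. -/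
open MvPolynomial

/-- `PathMonomials G t` is the set of products of the vertex variables along the paths of
`G` with `t` (pairwise distinct) vertices; it generates the path ideal `I_t(G)`. -/
def PathMonomials {V : Type*} [DecidableEq V] {K : Type*} [Field K]
    (G : SimpleGraph V) (t : ℕ) : Set (MvPolynomial V K) :=
  {f | ∃ l : List V, l.Nodup ∧ l.length = t ∧ l.Chain' G.Adj ∧ f = (l.map X).prod}

/-- The generating monomials of the product `I_c J_d` of squarefree Veronese ideals:
products of a squarefree monomial of degree `c` in the `x`-variables and one of degree
`d` in the `y`-variables. -/
def MixedMonomials (n m : ℕ) (K : Type*) [Field K] (c d : ℕ) :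
    Set (MvPolynomial (Fin n ⊕ Fin m) K) :=
  {f | ∃ sx : Finset (Fin n), ∃ sy : Finset (Fin m), sx.card = c ∧ sy.card = d ∧
    f = (∏ i ∈ sx, X (Sum.inl i)) * ∏ j ∈ sy, X (Sum.inr j)}

section CompleteBipartitePaths

variable {α β : Type*}

/-- A path of a complete bipartite graph alternates sides, so its numbers of left and right vertices
differ by at most one, the surplus being on the side of the first vertex. -/
theorem countP_isLeft_isRight_of_isChain (v : α ⊕ β) (l : List (α ⊕ β))
    (h : (v :: l).IsChain (completeBipartiteGraph α β).Adj) :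
    (v.isLeft = true → (v :: l).countP Sum.isRight ≤ (v :: l).countP Sum.isLeft ∧
      (v :: l).countP Sum.isLeft ≤ (v :: l).countP Sum.isRight + 1) ∧
    (v.isRight = true → (v :: l).countP Sum.isLeft ≤ (v :: l).countP Sum.isRight ∧
      (v :: l).countP Sum.isRight ≤ (v :: l).countP Sum.isLeft + 1) := by
  induction l generalizing v with
  | nil => rcases v with a | b <;> simp
  | cons w l ih =>
    rw [List.isChain_cons_cons] at h
    have key := ih w h.2
    have hadj := h.1
    rcases v with a | b <;> rcases w with c | d <;>
      simp [List.countP_cons] at key hadj ⊢ <;> omega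

/-- Two lists whose lengths are equal, or differ by one in favour of the left one, can be
interleaved to an alternating list which does not start on the right. -/
theorem exists_perm_isChain (xs : List α) (ys : List β)
    (h : xs.length = ys.length ∨ xs.length = ys.length + 1) :
    ∃ l : List (α ⊕ β), l.Perm (xs.map Sum.inl ++ ys.map Sum.inr) ∧
      l.IsChain (completeBipartiteGraph α β).Adj ∧ ∀ v ∈ l.head?, v.isLeft = true := by
  induction xs generalizing ys with
  | nil =>
    have : ys = [] := List.eq_nil_of_length_eq_zero (by simp at h; omega)
    subst this
    exact ⟨[], by simp⟩
  | cons x xs ih =>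
    cases ys with
    | nil =>
      have : xs = [] := by simpa using h
      subst this
      exact ⟨[Sum.inl x], by simp⟩
    | cons y ys =>
      obtain ⟨l, hperm, hchain, hhead⟩ := ih ys (by simp at h; omega)
      refine ⟨Sum.inl x :: Sum.inr y :: l, ?_, ?_, by simp⟩
      · simp only [List.map_cons, List.cons_append]
        exact ((hperm.cons _).trans List.perm_middle.symm).cons _
      · rw [List.isChain_cons_cons, List.isChain_cons]
        exact ⟨by simp, fun v hv => by simp [hhead v hv], hchain⟩

theorem exists_perm_isChain_toFinset {S : Finset (α ⊕ β)}
    (hl : S.toLeft.card ≤ S.toRight.card + 1) (hr : S.toRight.card ≤ S.toLeft.card + 1) :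
    ∃ l : List (α ⊕ β), l.Perm (S.toLeft.toList.map Sum.inl ++ S.toRight.toList.map Sum.inr) ∧
      l.IsChain (completeBipartiteGraph α β).Adj := by
  by_cases h : S.toRight.card ≤ S.toLeft.card
  · obtain ⟨l, hperm, hchain, -⟩ := exists_perm_isChain S.toLeft.toList S.toRight.toList
      (by simp only [Finset.length_toList]; omega)
    exact ⟨l, hperm, hchain⟩
  · have hlen := S.toRight.length_toList
    cases hys : S.toRight.toList with
    | nil => simp [hys] at hlen; omega
    | cons y ys =>
      obtain ⟨l, hperm, hchain, hhead⟩ := exists_perm_isChain S.toLeft.toList ys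
        (by simp [hys] at hlen ⊢; omega)
      refine ⟨Sum.inr y :: l, (hperm.cons _).trans List.perm_middle.symm, ?_⟩
      rw [List.isChain_cons]
      exact ⟨fun v hv => by simp [hhead v hv], hchain⟩

theorem card_filter_isLeft (S : Finset (α ⊕ β)) :
    (S.filter fun v => v.isLeft = true).card = S.toLeft.card := by
  rw [← Finset.card_map (Function.Embedding.inl : α ↪ α ⊕ β)]
  congr 1
  ext (a | b) <;> simp

theorem card_filter_isRight (S : Finset (α ⊕ β)) :
    (S.filter fun v => v.isRight = true).card = S.toRight.card := by
  rw [← Finset.card_map (Function.Embedding.inr : β ↪ α ⊕ β)]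
  congr 1
  ext (a | b) <;> simp

variable [DecidableEq α] [DecidableEq β]

/-- The vertex sets of paths in a complete bipartite graph. -/
theorem exists_path_toFinset_eq_iff (t : ℕ) (S : Finset (α ⊕ β)) :
    (∃ l : List (α ⊕ β), l.Nodup ∧ l.length = t ∧
      l.IsChain (completeBipartiteGraph α β).Adj ∧ l.toFinset = S) ↔
    S.toLeft.card + S.toRight.card = t ∧
      S.toLeft.card ≤ S.toRight.card + 1 ∧ S.toRight.card ≤ S.toLeft.card + 1 := by
  constructor
  · rintro ⟨l, hnd, rfl, hchain, rfl⟩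
    refine ⟨by rw [Finset.card_toLeft_add_card_toRight, List.toFinset_card_of_nodup hnd], ?_⟩
    have hcount (p : α ⊕ β → Bool) :
        (l.toFinset.filter fun v => p v = true).card = l.countP p := by
      rw [← List.toFinset_filter, List.toFinset_card_of_nodup (hnd.filter _),
        List.countP_eq_length_filter]
    rw [← card_filter_isLeft, ← card_filter_isRight, hcount, hcount]
    cases l with
    | nil => simp
    | cons v l =>
      have key := countP_isLeft_isRight_of_isChain v l hchain
      rcases v with a | b
      · have := key.1 rfl
        omega
      · have := key.2 rfl
        omega
  · rintro ⟨rfl, hl, hr⟩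
    obtain ⟨l, hperm, hchain⟩ := exists_perm_isChain_toFinset hl hr
    refine ⟨l, hperm.nodup_iff.2 ?_, by simp [hperm.length_eq], hchain, ?_⟩
    · rw [List.nodup_append]
      refine ⟨S.toLeft.nodup_toList.map Sum.inl_injective,
        S.toRight.nodup_toList.map Sum.inr_injective, by simp⟩
    · ext v
      rw [List.mem_toFinset, hperm.mem_iff]
      rcases v with a | b <;> simp

end CompleteBipartitePaths

theorem mem_pathMonomials_iff {V : Type*} [DecidableEq V] {K : Type*} [Field K]
    {G : SimpleGraph V} {t : ℕ} {f : MvPolynomial V K} :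
    f ∈ PathMonomials G t ↔ ∃ S : Finset V, (∃ l : List V, l.Nodup ∧ l.length = t ∧
      l.IsChain G.Adj ∧ l.toFinset = S) ∧ f = ∏ v ∈ S, X v := by
  constructor
  · rintro ⟨l, hnd, hlen, hchain, rfl⟩
    exact ⟨_, ⟨l, hnd, hlen, hchain, rfl⟩, (List.prod_toFinset _ hnd).symm⟩
  · rintro ⟨_, ⟨l, hnd, hlen, hchain, rfl⟩, rfl⟩
    exact ⟨l, hnd, hlen, hchain, List.prod_toFinset _ hnd⟩

theorem mem_mixedMonomials_iff {n m : ℕ} {K : Type*} [Field K] {c d : ℕ}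
    {f : MvPolynomial (Fin n ⊕ Fin m) K} :
    f ∈ MixedMonomials n m K c d ↔ ∃ S : Finset (Fin n ⊕ Fin m),
      (S.toLeft.card = c ∧ S.toRight.card = d) ∧ f = ∏ v ∈ S, X v := by
  constructor
  · rintro ⟨sx, sy, rfl, rfl, rfl⟩
    exact ⟨sx.disjSum sy, by simp, by simp [Finset.prod_disjSum]⟩
  · rintro ⟨S, ⟨rfl, rfl⟩, rfl⟩
    refine ⟨S.toLeft, S.toRight, rfl, rfl, ?_⟩
    rw [← Finset.prod_disjSum S.toLeft S.toRight (fun v => (X v : MvPolynomial _ K)),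
      Finset.toLeft_disjSum_toRight]

theorem pathMonomials_even (n m : ℕ) (K : Type*) [Field K] (q : ℕ) :
    PathMonomials (K := K) (completeBipartiteGraph (Fin n) (Fin m)) (2 * q) =
      MixedMonomials n m K q q := by
  ext f
  rw [mem_pathMonomials_iff, mem_mixedMonomials_iff]
  refine exists_congr fun S => and_congr_left fun _ => ?_
  rw [exists_path_toFinset_eq_iff]
  omega

theorem pathMonomials_odd (n m : ℕ) (K : Type*) [Field K] (q : ℕ) :
    PathMonomials (K := K) (completeBipartiteGraph (Fin n) (Fin m)) (2 * q + 1) =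
      MixedMonomials n m K q (q + 1) ∪ MixedMonomials n m K (q + 1) q := by
  ext f
  rw [Set.mem_union, mem_pathMonomials_iff, mem_mixedMonomials_iff, mem_mixedMonomials_iff,
    ← exists_or]
  refine exists_congr fun S => ?_
  rw [← or_and_right, exists_path_toFinset_eq_iff]
  refine and_congr_left fun _ => ?_
  omega

theorem span_mixedMonomials_mul (n m : ℕ) (K : Type*) [Field K] (c d : ℕ) :
    Ideal.span (MixedMonomials n m K c 0) * Ideal.span (MixedMonomials n m K 0 d) =
      Ideal.span (MixedMonomials n m K c d) := by
  rw [Ideal.span_mul_span']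
  congr 1
  ext f
  rw [Set.mem_mul]
  constructor
  · rintro ⟨_, ⟨sx, sx', hc, hx, rfl⟩, _, ⟨sy', sy, hy, hd, rfl⟩, rfl⟩
    rw [Finset.card_eq_zero] at hx hy
    subst hx hy
    exact ⟨sx, sy, hc, hd, by simp⟩
  · rintro ⟨sx, sy, hc, hd, rfl⟩
    exact ⟨_, ⟨sx, ∅, hc, rfl, rfl⟩, _, ⟨∅, sy, rfl, hd, rfl⟩, by simp⟩

/-- In the complete bipartite graph on `Fin n ⊕ Fin m`:
(1) for `q ≤ n`, `q ≤ m`, a finite vertex set is the vertex set of a path with `2q`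
vertices iff it consists of exactly `q` left and `q` right vertices;
(2) a finite vertex set is the vertex set of a path with `2q+1` vertices iff its numbers
of left and right vertices are `(q, q+1)` or `(q+1, q)`.
Consequently, the path ideal `I_t(G)` equals `I_q J_q` when `t = 2q`, and
`I_q J_{q+1} + I_{q+1} J_q` when `t = 2q+1`. -/
theorem path_ideal_complete_bipartite (K : Type*) [Field K] (n m q : ℕ)
    (hn : 1 ≤ n) (hm : 1 ≤ m) (hq : 1 ≤ q) :
    ((q ≤ n ∧ q ≤ m) → ∀ S : Finset (Fin n ⊕ Fin m),
      ((∃ l : List (Fin n ⊕ Fin m), l.Nodup ∧ l.length = 2 * q ∧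
          l.Chain' (completeBipartiteGraph (Fin n) (Fin m)).Adj ∧ l.toFinset = S) ↔
        ((S.filter fun v => v.isLeft = true).card = q ∧
         (S.filter fun v => v.isRight = true).card = q))) ∧
    (∀ S : Finset (Fin n ⊕ Fin m),
      ((∃ l : List (Fin n ⊕ Fin m), l.Nodup ∧ l.length = 2 * q + 1 ∧
          l.Chain' (completeBipartiteGraph (Fin n) (Fin m)).Adj ∧ l.toFinset = S) ↔
        (((S.filter fun v => v.isLeft = true).card = q ∧
          (S.filter fun v => v.isRight = true).card = q + 1) ∨
         ((S.filter fun v => v.isLeft = true).card = q + 1 ∧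
          (S.filter fun v => v.isRight = true).card = q)))) ∧
    ((q ≤ n ∧ q ≤ m) →
      Ideal.span (PathMonomials (K := K) (completeBipartiteGraph (Fin n) (Fin m)) (2 * q)) =
        Ideal.span (MixedMonomials n m K q 0) * Ideal.span (MixedMonomials n m K 0 q)) ∧
    (Ideal.span (PathMonomials (K := K) (completeBipartiteGraph (Fin n) (Fin m)) (2 * q + 1)) =
        Ideal.span (MixedMonomials n m K q 0) * Ideal.span (MixedMonomials n m K 0 (q + 1)) +
        Ideal.span (MixedMonomials n m K (q + 1) 0) * Ideal.span (MixedMonomials n m K 0 q)) := by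
  refine ⟨fun _ S => ?_, fun S => ?_, fun _ => ?_, ?_⟩
  · rw [card_filter_isLeft, card_filter_isRight]
    refine (exists_path_toFinset_eq_iff _ S).trans ?_
    omega
  · rw [card_filter_isLeft, card_filter_isRight]
    refine (exists_path_toFinset_eq_iff _ S).trans ?_
    omega
  · rw [pathMonomials_even, span_mixedMonomials_mul]
  · rw [pathMonomials_odd, span_mixedMonomials_mul, span_mixedMonomials_mul, Ideal.span_union,
      Submodule.add_eq_sup]
end

section
/- Let K be a field, let m_1, m_2 ≥ 1 and let a, b ≥ 1 be integers. Let T = K[x_{11},…,x_{1m_1},x_{21},…,x_{2m_2}], and let M_1 = (x_{11},…,x_{1m_1}) and M_2 = (x_{21},…,x_{2m_2}) be the ideals generated by the variables of the two blocks. Then the ideal L = M_1^a · M_2^b is normal, i.e., L^k is integrally closed for every k ≥ 1. -/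
open MvPolynomial

/-- If `f` satisfies a monic equation whose `i`-th coefficient is divisible by `p ^ (n * i)`,
with `p` prime, then `p ^ n` divides `f`. -/
theorem Prime.pow_dvd_of_integral_equation {R : Type*} [CommRing R] [IsDomain R] {p f : R}
    (hp : Prime p) {n N : ℕ} {c : ℕ → R}
    (hc : ∀ i ∈ Finset.Icc 1 N, p ^ (n * i) ∣ c i)
    (hf : f ^ N + ∑ i ∈ Finset.Icc 1 N, c i * f ^ (N - i) = 0) : p ^ n ∣ f := by
  suffices h : ∀ v ≤ n, p ^ v ∣ f from h n le_rfl
  intro v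
  induction v with
  | zero => simp
  | succ v ih =>
    intro hv
    obtain ⟨g, rfl⟩ := ih (by omega)
    have hsum : p ^ (v * N + 1) ∣
        ∑ i ∈ Finset.Icc 1 N, c i * (p ^ v * g) ^ (N - i) := by
      refine Finset.dvd_sum fun i hi => ?_
      have hmul := mul_dvd_mul (hc i hi)
        (pow_dvd_pow_of_dvd (Dvd.intro g rfl : p ^ v ∣ p ^ v * g) (N - i))
      refine dvd_trans ?_ hmul
      rw [← pow_mul, ← pow_add]
      apply pow_dvd_pow
      obtain ⟨h1, h2⟩ := Finset.mem_Icc.mp hi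
      obtain ⟨j, rfl⟩ := Nat.exists_eq_add_of_le h2
      rw [Nat.add_sub_cancel_left]
      nlinarith
    have hpow : p ^ (v * N + 1) ∣ (p ^ v * g) ^ N := by
      rw [eq_neg_of_add_eq_zero_left hf]
      exact hsum.neg_right
    rw [mul_pow, ← pow_mul, pow_succ] at hpow
    have hpg : p ∣ g :=
      hp.dvd_of_dvd_pow ((mul_dvd_mul_iff_left (pow_ne_zero _ hp.ne_zero)).mp hpow)
    rw [pow_succ]
    exact mul_dvd_mul_left _ hpg

namespace MvPolynomial

variable {σ K : Type*} [Field K]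

/-- The grading homomorphism sending `X i` to `X i * T ^ w i`. -/
noncomputable def gradingHom (K : Type*) [Field K] (w : σ → ℕ) :
    MvPolynomial σ K →ₐ[K] Polynomial (MvPolynomial σ K) :=
  aeval fun i => Polynomial.C (X i) * Polynomial.X ^ w i

theorem gradingHom_monomial (w : σ → ℕ) (d : σ →₀ ℕ) (r : K) :
    gradingHom K w (monomial d r) =
      Polynomial.C (monomial d r) * Polynomial.X ^ Finsupp.weight w d := by
  rw [gradingHom, aeval_monomial, monomial_eq, Finsupp.weight_apply, Finsupp.prod, Finsupp.prod,
    Finsupp.sum, map_mul, map_prod, ← Finset.prod_pow_eq_pow_sum, mul_assoc,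
    ← Finset.prod_mul_distrib]
  congr 1
  refine Finset.prod_congr rfl fun i _ => ?_
  rw [mul_pow, ← pow_mul, map_pow, smul_eq_mul, mul_comm (w i)]

theorem coeff_coeff_gradingHom (w : σ → ℕ) (f : MvPolynomial σ K) (d : σ →₀ ℕ) :
    coeff d ((gradingHom K w f).coeff (Finsupp.weight w d)) = coeff d f := by
  classical
  induction f using MvPolynomial.induction_on' with
  | monomial e r =>
    rw [gradingHom_monomial, Polynomial.coeff_C_mul_X_pow]
    split_ifs with h
    · rfl
    · rw [coeff_zero, coeff_monomial, if_neg]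
      rintro rfl
      exact h rfl
  | add p q hp hq => simp [hp, hq]

theorem le_weight_of_pow_dvd_gradingHom {w : σ → ℕ} {f : MvPolynomial σ K} {n : ℕ}
    (h : Polynomial.X ^ n ∣ gradingHom K w f) {d : σ →₀ ℕ} (hd : d ∈ f.support) :
    n ≤ Finsupp.weight w d := by
  by_contra! hlt
  rw [mem_support_iff, ← coeff_coeff_gradingHom w, Polynomial.X_pow_dvd_iff.mp h _ hlt] at hd
  exact hd (coeff_zero d)

theorem pow_dvd_gradingHom_of_mem_pow {w : σ → ℕ} {ι : Type*} {s : ι → σ} (hs : ∀ j, w (s j) = 1)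
    {f : MvPolynomial σ K} {n : ℕ}
    (hf : f ∈ Ideal.span (Set.range fun j => (X (s j) : MvPolynomial σ K)) ^ n) :
    Polynomial.X ^ n ∣ gradingHom K w f := by
  rw [← Ideal.mem_span_singleton, ← Ideal.span_singleton_pow]
  have hle : (Ideal.span (Set.range fun j => (X (s j) : MvPolynomial σ K))).map (gradingHom K w) ≤
      Ideal.span {Polynomial.X} := by
    rw [Ideal.map_span, Ideal.span_le]
    rintro _ ⟨_, ⟨j, rfl⟩, rfl⟩
    simp [gradingHom, hs, Ideal.mem_span_singleton]
  have hmem := Ideal.mem_map_of_mem (gradingHom K w) hf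
  rw [Ideal.map_pow] at hmem
  exact Ideal.pow_right_mono hle n hmem

theorem pow_dvd_gradingHom_of_isIntegralOverIdeal {w : σ → ℕ} {ι : Type*} {s : ι → σ}
    (hs : ∀ j, w (s j) = 1) {I : Ideal (MvPolynomial σ K)} {n : ℕ}
    (hI : I ≤ Ideal.span (Set.range fun j => (X (s j) : MvPolynomial σ K)) ^ n)
    {f : MvPolynomial σ K} (hf : IsIntegralOverIdeal I f) :
    Polynomial.X ^ n ∣ gradingHom K w f := by
  obtain ⟨N, -, c, hc, heq⟩ := hf
  refine Polynomial.prime_X.pow_dvd_of_integral_equation (N := N)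
    (c := fun i => gradingHom K w (c i)) (fun i hi => ?_) ?_
  · apply pow_dvd_gradingHom_of_mem_pow hs
    rw [pow_mul]
    exact Ideal.pow_right_mono hI i (hc i hi)
  · simpa using congrArg (gradingHom K w) heq

theorem prod_X_pow_mem_span_pow {ι : Type*} [Fintype ι] (s : ι → σ) (e : ι → ℕ) :
    ∏ j, (X (s j) : MvPolynomial σ K) ^ e j ∈
      Ideal.span (Set.range fun j => (X (s j) : MvPolynomial σ K)) ^ ∑ j, e j := by
  rw [← Finset.prod_pow_eq_pow_sum]
  exact Ideal.prod_mem_prod fun j _ =>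
    Ideal.pow_mem_pow (Ideal.subset_span (Set.mem_range_self j)) _

theorem monomial_mem_span_pow_mul_span_pow {α β : Type*} [Fintype α] [Fintype β]
    (d : α ⊕ β →₀ ℕ) (r : K) :
    monomial d r ∈
      Ideal.span (Set.range fun j => (X (Sum.inl j) : MvPolynomial (α ⊕ β) K)) ^
          Finsupp.weight (Sum.elim 1 0 : α ⊕ β → ℕ) d *
        Ideal.span (Set.range fun j => (X (Sum.inr j) : MvPolynomial (α ⊕ β) K)) ^
          Finsupp.weight (Sum.elim 0 1 : α ⊕ β → ℕ) d := by
  rw [monomial_eq, Finsupp.prod_fintype _ _ (by simp), Fintype.prod_sum_type]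
  apply Ideal.mul_mem_left
  simp only [Finsupp.weight_apply]
  rw [Finsupp.sum_fintype _ _ (by simp), Finsupp.sum_fintype _ _ (by simp)]
  simp only [Fintype.sum_sum_type, Sum.elim_inl, Sum.elim_inr, Pi.one_apply, Pi.zero_apply,
    smul_eq_mul, mul_one, mul_zero, Finset.sum_const_zero, add_zero, zero_add]
  exact Ideal.mul_mem_mul (prod_X_pow_mem_span_pow _ _) (prod_X_pow_mem_span_pow _ _)

end MvPolynomial

/-- In `T = K[x_{11},…,x_{1m₁},x_{21},…,x_{2m₂}]`, with `M₁` and `M₂` the ideals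
generated by the variables of the two blocks, the ideal `L = M₁^a M₂^b` is normal:
`L^k` is integrally closed for every `k ≥ 1`. -/
theorem product_of_powers_of_block_maximal_ideals_normal (K : Type*) [Field K]
    (m₁ m₂ a b : ℕ) (hm₁ : 1 ≤ m₁) (hm₂ : 1 ≤ m₂) (ha : 1 ≤ a) (hb : 1 ≤ b)
    (M₁ M₂ : Ideal (MvPolynomial (Fin m₁ ⊕ Fin m₂) K))
    (hM₁ : M₁ = Ideal.span (Set.range fun j : Fin m₁ =>
        (X (Sum.inl j) : MvPolynomial (Fin m₁ ⊕ Fin m₂) K)))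
    (hM₂ : M₂ = Ideal.span (Set.range fun j : Fin m₂ =>
        (X (Sum.inr j) : MvPolynomial (Fin m₁ ⊕ Fin m₂) K))) :
    ∀ k : ℕ, 1 ≤ k → IsIntegrallyClosedIdeal ((M₁ ^ a * M₂ ^ b) ^ k) := by
  intro k _ f hf
  subst hM₁ hM₂
  rw [mul_pow, ← pow_mul, ← pow_mul] at hf ⊢
  have h₁ := pow_dvd_gradingHom_of_isIntegralOverIdeal
    (w := (Sum.elim 1 0 : Fin m₁ ⊕ Fin m₂ → ℕ)) (fun _ => rfl) Ideal.mul_le_left hf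
  have h₂ := pow_dvd_gradingHom_of_isIntegralOverIdeal
    (w := (Sum.elim 0 1 : Fin m₁ ⊕ Fin m₂ → ℕ)) (fun _ => rfl) Ideal.mul_le_right hf
  rw [f.as_sum]
  exact Ideal.sum_mem _ fun d hd => Ideal.mul_mono
    (Ideal.pow_le_pow_right (le_weight_of_pow_dvd_gradingHom h₁ hd))
    (Ideal.pow_le_pow_right (le_weight_of_pow_dvd_gradingHom h₂ hd))
    (monomial_mem_span_pow_mul_span_pow d _)
end
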